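/- Let p be a prime, let a be an element of ZMod p, and let G be the simple graph on ZMod p in which distinct vertices x, y are adjacent if and only if y = x^3 + a or x = y^3 + a. Then G contains at most 9 triangles, i.e., the number of 3-cliques of G is at most 9. -/

import Mathlib

/-!
Put `T x = x ^ 3 + a`. Each edge of the graph is of the form `{x, T x}`, and a vertex is the source
of at most one such edge. The three edges of a triangle therefore have the three vertices as
sources, one each, so the triangle is a 3-cycle of `T` (`triangle_eq_orbit`). It is then the
`T`-orbit of any of its vertices, so distinct triangles are disjoint, and all their vertices are
roots of the monic polynomial `T (T (T X)) - X` of degree 27. Hence there are at most `27 / 3 = 9`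
triangles.
-/

open scoped Classical

/-- A triangle in the graph of a self-map `T` is the `T`-orbit of each of its vertices, and these
vertices are fixed by the third iterate of `T`. -/
lemma triangle_eq_orbit {V : Type*} [DecidableEq V] (T : V → V) {s : Finset V}
    (hs : (SimpleGraph.fromRel (fun x y : V => y = T x)).IsNClique 3 s)
    {v : V} (hv : v ∈ s) : s = {v, T v, T (T v)} ∧ T (T (T v)) = v := by
  rw [SimpleGraph.is3Clique_iff] at hs
  obtain ⟨x, y, z, hxy, hxz, hyz, rfl⟩ := hs
  simp only [SimpleGraph.fromRel_adj] at hxy hxz hyz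
  -- Only the two cyclic orientations of the edges are compatible with `T` being a function.
  have key : (y = T x ∧ z = T y ∧ x = T z) ∨ (x = T y ∧ y = T z ∧ z = T x) := by
    grind
  simp only [Finset.mem_insert, Finset.mem_singleton] at hv
  rcases key with ⟨h1, h2, h3⟩ | ⟨h1, h2, h3⟩ <;> rcases hv with rfl | rfl | rfl <;>
    refine ⟨?_, by grind⟩ <;> ext w <;>
    simp only [Finset.mem_insert, Finset.mem_singleton] <;> grind

/-- The vertices that can lie on a triangle are roots of a polynomial of degree 27. -/
lemma card_fixed_third_iterate_le (p : ℕ) [Fact p.Prime] (a : ZMod p) (S : Finset (ZMod p))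
    (hS : ∀ x ∈ S, ((x ^ 3 + a) ^ 3 + a) ^ 3 + a = x) : S.card ≤ 27 := by
  set P : Polynomial (ZMod p) :=
    ((Polynomial.X ^ 3 + Polynomial.C a) ^ 3 + Polynomial.C a) ^ 3 + Polynomial.C a
      - Polynomial.X with hP
  have hdeg : P.natDegree = 27 := by rw [hP]; compute_degree!
  have h0 : P ≠ 0 := by
    intro h
    simp [h] at hdeg
  rw [← hdeg]
  refine Polynomial.card_le_degree_of_subset_roots fun x hx => ?_
  rw [Polynomial.mem_roots h0, Polynomial.IsRoot.def, hP]
  simp [hS x hx]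

/-- The cubic orbital network on `ZMod p` with one generator `T x = x^3 + a`
contains at most 9 triangles (3-cliques). -/
theorem stmt_12 (p : ℕ) [Fact p.Prime] (a : ZMod p) :
    ((SimpleGraph.fromRel (fun x y : ZMod p => y = x ^ 3 + a)).cliqueFinset 3).card ≤ 9 := by
  set C := (SimpleGraph.fromRel (fun x y : ZMod p => y = x ^ 3 + a)).cliqueFinset 3 with hC
  have orbit : ∀ s ∈ C, ∀ v ∈ s, s = {v, v ^ 3 + a, (v ^ 3 + a) ^ 3 + a} ∧
      ((v ^ 3 + a) ^ 3 + a) ^ 3 + a = v :=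
    fun s hs v hv => triangle_eq_orbit (fun x : ZMod p => x ^ 3 + a)
      (SimpleGraph.mem_cliqueFinset_iff.1 hs) hv
  have hdisj : (C : Set (Finset (ZMod p))).PairwiseDisjoint id := by
    intro s hs t ht hst
    refine Finset.disjoint_left.2 fun v hvs hvt => hst ?_
    exact (orbit s hs v hvs).1.trans (orbit t ht v hvt).1.symm
  have hcard : (C.biUnion id).card = C.card * 3 := by
    rw [Finset.card_biUnion hdisj]
    exact Finset.sum_const_nat fun s hs => ((SimpleGraph.mem_cliqueFinset_iff).1 hs).card_eq
  have hle := card_fixed_third_iterate_le p a (C.biUnion id) fun x hx => by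
    obtain ⟨s, hs, hxs⟩ := Finset.mem_biUnion.1 hx
    exact (orbit s hs x hxs).2
  omega
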